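/- Let Q° be a Dynkin quiver with vertex set I°. Then there is no nonzero vector α ∈ ℤ^{I°} such that −1 ≤ (α,η) ≤ 0 for all positive roots η of Q°. -/

import Mathlib

open scoped BigOperators

noncomputable section

/-- A quiver with a finite vertex set `I` and a finite arrow set `A`;
`h a` and `t a` are the head and the tail of the arrow `a`. -/
structure FinQuiver where
  I : Type
  [fintypeI : Fintype I]
  [decEqI : DecidableEq I]
  A : Type
  [fintypeA : Fintype A]
  h : A → I
  t : A → I

attribute [instance] FinQuiver.fintypeI FinQuiver.decEqI FinQuiver.fintypeA

namespace FinQuiver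

variable (Q : FinQuiver)

/-- Arrows of the double quiver `Q̄` : every arrow `a : i → j` of `Q` (as `Sum.inl a`)
together with a reverse arrow `a* : j → i` (as `Sum.inr a`). -/
@[reducible] def DA : Type := Q.A ⊕ Q.A

instance : Fintype Q.DA := inferInstanceAs (Fintype (Q.A ⊕ Q.A))

/-- Head of an arrow of the double quiver. -/
@[reducible] def dh : Q.DA → Q.I := fun a => match a with
  | Sum.inl a => Q.h a
  | Sum.inr a => Q.t a

/-- Tail of an arrow of the double quiver. -/
@[reducible] def dt : Q.DA → Q.I := fun a => match a with
  | Sum.inl a => Q.t a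
  | Sum.inr a => Q.h a

/-- The symmetric bilinear form
`(α,β) = ∑_{i∈I} 2 α_i β_i − ∑_{a∈Q̄} α_{h(a)} β_{t(a)}` on `ℤ^I`. -/
def bil (α β : Q.I → ℤ) : ℤ :=
  (∑ i, 2 * α i * β i) - ∑ a : Q.DA, α (Q.dh a) * β (Q.dt a)

/-- `p(α) = 1 − q(α) = 1 − α·α + ∑_{a ∈ Q} α_{t(a)} α_{h(a)}`. -/
def pp (α : Q.I → ℤ) : ℤ :=
  1 - (∑ i, α i * α i) + ∑ a : Q.A, α (Q.t a) * α (Q.h a)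

/-- The coordinate vector `ε_i` at a vertex `i`. -/
def ev (i : Q.I) : Q.I → ℤ := fun j => if j = i then 1 else 0

/-- The coordinate vector of a vertex, as a vector of natural numbers. -/
def evN (i : Q.I) : Q.I → ℕ := fun j => if j = i then 1 else 0

/-- A vertex is loopfree if no arrow has both its head and its tail there. -/
def Loopfree (i : Q.I) : Prop := ∀ a : Q.A, ¬ (Q.h a = i ∧ Q.t a = i)

/-- The reflection `s_i(α) = α − (α,ε_i) ε_i` at a (loopfree) vertex `i`. -/
def refl (i : Q.I) (α : Q.I → ℤ) : Q.I → ℤ := α - Q.bil α (Q.ev i) • Q.ev i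

/-- Two vertices are joined by some arrow. -/
def Adj (i j : Q.I) : Prop :=
  ∃ a : Q.A, (Q.h a = i ∧ Q.t a = j) ∨ (Q.h a = j ∧ Q.t a = i)

/-- The quiver is connected. -/
def Connected : Prop := ∀ i j : Q.I, Relation.ReflTransGen Q.Adj i j

/-- The support of the vector `α` is connected in `Q`. -/
def SuppConnected (α : Q.I → ℤ) : Prop :=
  ∀ i j : Q.I, α i ≠ 0 → α j ≠ 0 →
    Relation.ReflTransGen (fun x y => α x ≠ 0 ∧ α y ≠ 0 ∧ Q.Adj x y) i j

/-- The fundamental region: nonzero nonnegative vectors with connected support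
such that `(α, ε_i) ≤ 0` for every vertex `i`. -/
def InFund (α : Q.I → ℤ) : Prop :=
  α ≠ 0 ∧ (∀ i, 0 ≤ α i) ∧ Q.SuppConnected α ∧ ∀ i, Q.bil α (Q.ev i) ≤ 0

/-- The roots of the Kac root system attached to `Q` : the real roots form the orbit
of the simple roots (coordinate vectors at loopfree vertices) under the reflections at
loopfree vertices, and the imaginary roots form the orbit of `±(fundamental region)`
under these reflections. -/
inductive IsRoot : (Q.I → ℤ) → Prop
  | simple (i : Q.I) (hi : Q.Loopfree i) : IsRoot (Q.ev i)
  | fund (α : Q.I → ℤ) (hα : Q.InFund α) : IsRoot α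
  | neg_fund (α : Q.I → ℤ) (hα : Q.InFund α) : IsRoot (-α)
  | reflect (i : Q.I) (hi : Q.Loopfree i) (α : Q.I → ℤ) (hα : IsRoot α) :
      IsRoot (Q.refl i α)

/-- Positive roots: roots all of whose components are nonnegative. -/
def IsPosRoot (α : Q.I → ℤ) : Prop := Q.IsRoot α ∧ (∀ i, 0 ≤ α i) ∧ α ≠ 0

/-- The Tits form is positive semidefinite. -/
def PosSemidef : Prop := ∀ α : Q.I → ℤ, 0 ≤ Q.bil α α

/-- The Tits form is positive definite. -/
def PosDef : Prop := Q.PosSemidef ∧ ∀ α : Q.I → ℤ, Q.bil α α = 0 → α = 0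

/-- Dynkin quivers: connected, with positive definite Tits form. -/
def IsDynkin : Prop := Q.Connected ∧ Q.PosDef

/-- Extended Dynkin quivers: connected, with positive semidefinite but not
positive definite Tits form. -/
def IsExtDynkin : Prop := Q.Connected ∧ Q.PosSemidef ∧ ¬ Q.PosDef

/-- `δ` is the minimal positive imaginary root of an extended Dynkin quiver:
the minimal nonzero nonnegative vector in the radical of the Tits form. -/
def IsMinImag (δ : Q.I → ℤ) : Prop :=
  (∀ i, 0 ≤ δ i) ∧ δ ≠ 0 ∧ (∀ i, Q.bil δ (Q.ev i) = 0) ∧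
    ∀ β : Q.I → ℤ, (∀ i, 0 ≤ β i) → β ≠ 0 → (∀ i, Q.bil β (Q.ev i) = 0) →
      ∀ i, δ i ≤ β i

/-- The subquiver of `Q` on a subset `S` of vertices and a subset `B` of arrows. -/
def restrict (S : Set Q.I) (B : Set Q.A) (hh : ∀ a ∈ B, Q.h a ∈ S)
    (ht : ∀ a ∈ B, Q.t a ∈ S) : FinQuiver :=
  { I := S
    fintypeI := Fintype.ofFinite S
    decEqI := Classical.decEq _
    A := B
    fintypeA := Fintype.ofFinite B
    h := fun a => ⟨Q.h a.1, hh a.1 a.2⟩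
    t := fun a => ⟨Q.t a.1, ht a.1 a.2⟩ }

/-- The support quiver of a vector: the full subquiver on the support of `β`. -/
def suppQuiver (β : Q.I → ℤ) : FinQuiver :=
  Q.restrict {i | β i ≠ 0} {a | β (Q.h a) ≠ 0 ∧ β (Q.t a) ≠ 0}
    (fun _ ha => ha.1) (fun _ ha => ha.2)

/-- A dimension vector (of natural numbers), viewed in `ℤ^I`. -/
def toZ (α : Q.I → ℕ) : Q.I → ℤ := fun i => (α i : ℤ)

/-- An oriented cycle in the double quiver `Q̄`, consisting of `n+1` arrows,
the tail of each arrow being the head of the (cyclically) next one. -/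
structure Cyc (Q' : FinQuiver) where
  n : ℕ
  ar : Fin (n + 1) → Q'.DA
  compat : ∀ i : Fin (n + 1), Q'.dt (ar i) = Q'.dh (ar (i + 1))

section WithField

variable (K : Type) [Field K]

/-- `λ·α = ∑_i λ_i α_i`. -/
def pair (l : Q.I → K) (α : Q.I → ℤ) : K := ∑ i, l i * (α i : K)

/-- `R_λ^+`, the set of positive roots `α` with `λ·α = 0`. -/
def Rplus (l : Q.I → K) : Set (Q.I → ℤ) :=
  {α | Q.IsPosRoot α ∧ Q.pair K l α = 0}

/-- `ℕ R_λ^+`, the set of sums (including the empty sum `0`) of elements of `R_λ^+`. -/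
def NRplus (l : Q.I → K) : Set (Q.I → ℤ) :=
  (AddSubmonoid.closure (Q.Rplus K l) : AddSubmonoid (Q.I → ℤ))

/-- `Σ_λ` : the elements `α ∈ R_λ^+` with `p(α) > ∑ p(β⁽ᵗ⁾)` for every decomposition
of `α` as a sum of at least two elements `β⁽ᵗ⁾` of `R_λ^+`. -/
def SigmaSet (l : Q.I → K) : Set (Q.I → ℤ) :=
  {α | α ∈ Q.Rplus K l ∧
    ∀ (n : ℕ) (β : Fin n → (Q.I → ℤ)), 2 ≤ n → (∀ j, β j ∈ Q.Rplus K l) →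
      α = ∑ j, β j → (∑ j, Q.pp (β j)) < Q.pp α}

/-- The dual reflection `r_i(λ)_j = λ_j − (ε_i,ε_j) λ_i`. -/
def coRefl (i : Q.I) (l : Q.I → K) : Q.I → K :=
  fun j => l j - (Q.bil (Q.ev i) (Q.ev j) : ℤ) * l i

/-- A single admissible reflection applied to the pair `(λ, α)`:
a reflection at a loopfree vertex `i` with `λ_i ≠ 0`. -/
def AdmStep (x y : (Q.I → K) × (Q.I → ℤ)) : Prop :=
  ∃ i : Q.I, Q.Loopfree i ∧ x.1 i ≠ 0 ∧ y.1 = Q.coRefl K i x.1 ∧ y.2 = Q.refl i x.2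

/-- `(ν,β)` is obtained from `(λ,α)` by a sequence of admissible reflections:
the two pairs lie in the same class of the equivalence relation generated by
admissible reflections. -/
def AdmEquiv (x y : (Q.I → K) × (Q.I → ℤ)) : Prop :=
  Relation.EqvGen (Q.AdmStep K) x y

/-- The space `Rep(Q̄,α)` of representations of the double quiver. -/
def Rep (α : Q.I → ℕ) : Type :=
  ∀ a : Q.DA, Matrix (Fin (α (Q.dh a))) (Fin (α (Q.dt a))) K

/-- The moment map
`μ_α(x)_i = ∑_{a∈Q, h(a)=i} x_a x_{a*} − ∑_{a∈Q, t(a)=i} x_{a*} x_a`. -/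
def moment (α : Q.I → ℕ) (x : Q.Rep K α) (i : Q.I) :
    Matrix (Fin (α i)) (Fin (α i)) K :=
  (∑ a : Q.A, if h : Q.h a = i then
      (x (Sum.inl a) * x (Sum.inr a)).submatrix
        (Fin.cast (congrArg α h).symm) (Fin.cast (congrArg α h).symm)
    else 0)
  - ∑ a : Q.A, if h : Q.t a = i then
      (x (Sum.inr a) * x (Sum.inl a)).submatrix
        (Fin.cast (congrArg α h).symm) (Fin.cast (congrArg α h).symm)
    else 0

/-- The fibre `μ_α^{-1}(λ)` of the moment map over (the central element
corresponding to) `λ`. -/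
def MomentFiber (l : Q.I → K) (α : Q.I → ℕ) : Set (Q.Rep K α) :=
  {x | ∀ i : Q.I, Q.moment K α x i = l i • (1 : Matrix (Fin (α i)) (Fin (α i)) K)}

/-- The group `∏_i GL(α_i,K)`; it acts on `Rep(Q̄,α)` by conjugation, with the same
orbits and the same invariant functions as `G(α) = (∏_i GL(α_i,K))/K^*`. -/
def Gl (α : Q.I → ℕ) : Type := ∀ i : Q.I, Matrix.GeneralLinearGroup (Fin (α i)) K

/-- The conjugation action of `∏_i GL(α_i,K)` on `Rep(Q̄,α)`. -/
def glAct (α : Q.I → ℕ) (g : Q.Gl K α) (x : Q.Rep K α) : Q.Rep K α :=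
  fun a => (g (Q.dh a) : Matrix (Fin (α (Q.dh a))) (Fin (α (Q.dh a))) K) * x a *
    (((g (Q.dt a))⁻¹ : Matrix.GeneralLinearGroup (Fin (α (Q.dt a))) K) :
      Matrix (Fin (α (Q.dt a))) (Fin (α (Q.dt a))) K)

/-- Coordinates on `Rep(Q̄,α)`: matrix entries. -/
def Coords (α : Q.I → ℕ) : Type :=
  Σ a : Q.DA, Fin (α (Q.dh a)) × Fin (α (Q.dt a))

/-- The coordinate ring `K[V]` of a subset `V` of `Rep(Q̄,α)` : the algebra of
`K`-valued functions on `V` which are restrictions of polynomial functions. -/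
def fnRing (α : Q.I → ℕ) (V : Set (Q.Rep K α)) : Subalgebra K (↥V → K) :=
  (MvPolynomial.aeval
    (fun c : Q.Coords α => fun v : ↥V => v.1 c.1 c.2.1 c.2.2) :
    MvPolynomial (Q.Coords α) K →ₐ[K] (↥V → K)).range

end WithField

end FinQuiver

/-- The subalgebra of functions invariant under a relation (e.g. the orbit
relation of a group action). -/
def relInv (K : Type) [Field K] {V : Type} (R : V → V → Prop) :
    Subalgebra K (V → K) where
  carrier := {f | ∀ x y : V, R x y → f x = f y}
  mul_mem' := by
    intro f g hf hg x y hxy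
    simp only [Pi.mul_apply, hf x y hxy, hg x y hxy]
  one_mem' := fun x y _ => rfl
  add_mem' := by
    intro f g hf hg x y hxy
    simp only [Pi.add_apply, hf x y hxy, hg x y hxy]
  zero_mem' := fun x y _ => rfl
  algebraMap_mem' := fun c x y _ => rfl

namespace FinQuiver

variable (Q : FinQuiver) (K : Type) [Field K]

/-- The coordinate ring of the Marsden–Weinstein reduction
`N(λ,α) = μ_α^{-1}(λ) ⫽ G(α)` : the `G(α)`-invariant functions in the coordinate
ring of `μ_α^{-1}(λ)`.  Two such reductions are isomorphic as (affine) varieties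
exactly when these `K`-algebras are isomorphic. -/
def InvRing (l : Q.I → K) (α : Q.I → ℕ) :
    Subalgebra K (↥(Q.MomentFiber K l α) → K) :=
  Q.fnRing K α (Q.MomentFiber K l α) ⊓
    relInv K (fun x y : ↥(Q.MomentFiber K l α) =>
      ∃ g : Q.Gl K α, y.1 = Q.glAct K α g x.1)

/-- Index type for a product `∏_t X_t^{m_t}`. -/
@[reducible] def SymIdx (s : ℕ) (m : Fin s → ℕ) : Type := Σ t : Fin s, Fin (m t)

/-- The product `∏_{t} Rep(Q̄, d_t)^{m_t}` of representation spaces. -/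
def SymRep (s : ℕ) (m : Fin s → ℕ) (d : Fin s → (Q.I → ℕ)) : Type :=
  ∀ p : SymIdx s m, Q.Rep K (d p.1)

/-- The product `∏_t μ_{d_t}^{-1}(λ)^{m_t}` of moment map fibres. -/
def SymFiber (s : ℕ) (m : Fin s → ℕ) (d : Fin s → (Q.I → ℕ)) (l : Q.I → K) :
    Set (Q.SymRep K s m d) :=
  {x | ∀ p : SymIdx s m, x p ∈ Q.MomentFiber K l (d p.1)}

/-- Polynomial functions on the product of fibres. -/
def symFnRing (s : ℕ) (m : Fin s → ℕ) (d : Fin s → (Q.I → ℕ)) (l : Q.I → K) :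
    Subalgebra K (↥(Q.SymFiber K s m d l) → K) :=
  (MvPolynomial.aeval
    (fun c : Σ p : SymIdx s m, Q.Coords (d p.1) =>
      fun v : ↥(Q.SymFiber K s m d l) => v.1 c.1 c.2.1 c.2.2.1 c.2.2.2) :
    MvPolynomial (Σ p : SymIdx s m, Q.Coords (d p.1)) K →ₐ[K]
      (↥(Q.SymFiber K s m d l) → K)).range

/-- The componentwise action of the product of the groups `∏ GL(d_t)^{m_t}`. -/
def symGlAct (s : ℕ) (m : Fin s → ℕ) (d : Fin s → (Q.I → ℕ))
    (g : ∀ p : SymIdx s m, Q.Gl K (d p.1)) (x : Q.SymRep K s m d) :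
    Q.SymRep K s m d :=
  fun p => Q.glAct K (d p.1) (g p) (x p)

/-- The action of `∏_t S_{m_t}` permuting the factors of each `X_t^{m_t}`. -/
def symPermAct (s : ℕ) (m : Fin s → ℕ) (d : Fin s → (Q.I → ℕ))
    (π : ∀ t : Fin s, Equiv.Perm (Fin (m t))) (x : Q.SymRep K s m d) :
    Q.SymRep K s m d :=
  fun p => x ⟨p.1, π p.1 p.2⟩

/-- The coordinate ring of the product of symmetric products
`∏_t S^{m_t} N(λ, d_t)` of Marsden–Weinstein reductions: functions on
`∏_t μ_{d_t}^{-1}(λ)^{m_t}` which are polynomial, invariant under all the groups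
`G(d_t)` acting on the separate factors, and symmetric under permutations of the
`m_t` factors of each type `t`. -/
def SymInvRing (s : ℕ) (m : Fin s → ℕ) (d : Fin s → (Q.I → ℕ)) (l : Q.I → K) :
    Subalgebra K (↥(Q.SymFiber K s m d l) → K) :=
  Q.symFnRing K s m d l ⊓
    relInv K (fun x y : ↥(Q.SymFiber K s m d l) =>
      ∃ g : ∀ p : SymIdx s m, Q.Gl K (d p.1), y.1 = Q.symGlAct K s m d g x.1) ⊓
    relInv K (fun x y : ↥(Q.SymFiber K s m d l) =>
      ∃ π : ∀ t : Fin s, Equiv.Perm (Fin (m t)), y.1 = Q.symPermAct K s m d π x.1)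

/-- The trace function `tr_p` of an oriented cycle `p` in `Q̄` :
`tr_p(x) = tr(x_{a_1} ⋯ x_{a_ℓ})`, written out via matrix entries. -/
def cycTr (α : Q.I → ℕ) (p : Q.Cyc) (x : Q.Rep K α) : K :=
  ∑ c : ∀ i : Fin (p.n + 1), Fin (α (Q.dh (p.ar i))),
    ∏ i : Fin (p.n + 1),
      x (p.ar i) (c i) (Fin.cast (congrArg α (p.compat i)).symm (c (i + 1)))

/-- `U` is a subrepresentation of the `Π^λ`-module given by the point
`x ∈ Rep(Q̄,α)` : a collection of subspaces stable under all the maps `x_a`. -/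
def SubRep (α : Q.I → ℕ) (x : Q.Rep K α)
    (U : ∀ i : Q.I, Submodule K (Fin (α i) → K)) : Prop :=
  ∀ a : Q.DA, ∀ v ∈ U (Q.dt a), (x a).mulVec v ∈ U (Q.dh a)

/-- The module given by `x` has the simple module `S_{i₀}` (dimension vector
`ε_{i₀}`, all arrows acting as zero) as a composition factor: it has a subquotient
of dimension vector `ε_{i₀}` on which all arrows act as zero. -/
def HasSFactor (α : Q.I → ℕ) (i0 : Q.I) (x : Q.Rep K α) : Prop :=
  ∃ U W : ∀ i : Q.I, Submodule K (Fin (α i) → K),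
    Q.SubRep K α x U ∧ Q.SubRep K α x W ∧ (∀ i, U i ≤ W i) ∧
    (∀ i, Module.finrank K (W i) =
      Module.finrank K (U i) + (if i = i0 then 1 else 0)) ∧
    (∀ a : Q.DA, Q.dh a = i0 → Q.dt a = i0 →
      ∀ v ∈ W (Q.dt a), (x a).mulVec v ∈ U (Q.dh a))

/-- `W/U` is a simple subquotient of the module given by `x`; the simple
subquotients of a module are, up to isomorphism, exactly its composition factors. -/
def SimpleSubquot (α : Q.I → ℕ) (x : Q.Rep K α)
    (U W : ∀ i : Q.I, Submodule K (Fin (α i) → K)) : Prop :=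
  Q.SubRep K α x U ∧ Q.SubRep K α x W ∧ (∀ i, U i ≤ W i) ∧ U ≠ W ∧
    ∀ V : ∀ i : Q.I, Submodule K (Fin (α i) → K),
      Q.SubRep K α x V → (∀ i, U i ≤ V i) → (∀ i, V i ≤ W i) → V = U ∨ V = W

/-- The direct sum map `∏_{j=1}^m Rep(Q̄,δ) → Rep(Q̄,mδ)` (block diagonal). -/
def dsMap (δ : Q.I → ℕ) (m : ℕ) (y : Fin m → Q.Rep K δ) :
    Q.Rep K (fun i => m * δ i) :=
  fun a => Matrix.of fun r c =>
    if (finProdFinEquiv.symm r).1 = (finProdFinEquiv.symm c).1 then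
      y (finProdFinEquiv.symm r).1 a (finProdFinEquiv.symm r).2
        (finProdFinEquiv.symm c).2
    else 0

end FinQuiver


/-!
A vector `α` of the root lattice with `|(α,η)| ≤ 1` for every root `η` vanishes: if `α ≠ 0`, then
`∑ i, α_i (α,ε_i) = (α,α) > 0` gives a vertex `i` where `α_i` and `(α,ε_i)` have the same sign.
Since `(α,ε_i) = ±1`, the reflection `s_i` moves `α_i` one step towards `0`, fixes the other
components, and preserves the hypothesis because it permutes the roots. Hence by induction
on `∑ i, |α_i|` the vector `s_i α` is zero, and so is `α`.
-/

namespace FinQuiver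

variable {Q : FinQuiver} {α β η : Q.I → ℤ} {i j : Q.I}

theorem bil_comm (α β : Q.I → ℤ) : Q.bil α β = Q.bil β α := by
  have hreverse : ∑ a : Q.DA, α (Q.dh a) * β (Q.dt a) = ∑ a : Q.DA, β (Q.dh a) * α (Q.dt a) :=
    Fintype.sum_equiv (Equiv.sumComm _ _) _ _ (by rintro (a | a) <;> exact mul_comm _ _)
  simp only [bil, hreverse, mul_right_comm]

theorem bil_add_left (α β γ : Q.I → ℤ) : Q.bil (α + β) γ = Q.bil α γ + Q.bil β γ := by
  simp only [bil, Pi.add_apply, mul_add, add_mul, Finset.sum_add_distrib]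
  ring

theorem bil_smul_left (c : ℤ) (α β : Q.I → ℤ) : Q.bil (c • α) β = c • Q.bil α β := by
  simp only [bil, Pi.smul_apply, smul_eq_mul, mul_sub, Finset.mul_sum, mul_assoc, mul_left_comm]

variable (Q) in
/-- The form `bil` bundled as a bilinear form over `ℤ`, which makes Mathlib's lemmas on bilinear
maps available for it. -/
def bilForm : LinearMap.BilinForm ℤ (Q.I → ℤ) :=
  LinearMap.mk₂ ℤ Q.bil bil_add_left bil_smul_left
    (fun α β γ => by simp only [bil_comm α, bil_add_left])
    (fun c α β => by simp only [bil_comm α, bil_smul_left])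

theorem bil_sub_left (α β γ : Q.I → ℤ) : Q.bil (α - β) γ = Q.bil α γ - Q.bil β γ :=
  Q.bilForm.map_sub₂ α β γ

theorem bil_sub_right (α β γ : Q.I → ℤ) : Q.bil α (β - γ) = Q.bil α β - Q.bil α γ :=
  map_sub (Q.bilForm α) β γ

theorem bil_neg_left (α β : Q.I → ℤ) : Q.bil (-α) β = -Q.bil α β :=
  Q.bilForm.map_neg₂ α β

theorem bil_neg_right (α β : Q.I → ℤ) : Q.bil α (-β) = -Q.bil α β :=
  map_neg (Q.bilForm α) β

theorem bil_zero_left (β : Q.I → ℤ) : Q.bil 0 β = 0 :=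
  Q.bilForm.map_zero₂ β

theorem bil_smul_right (c : ℤ) (α β : Q.I → ℤ) : Q.bil α (c • β) = c • Q.bil α β :=
  map_smul (Q.bilForm α) c β

theorem bil_eq_sum_ev (α β : Q.I → ℤ) : Q.bil α β = ∑ i, β i * Q.bil α (Q.ev i) := by
  have hev (i : Q.I) : Q.ev i = fun j => if i = j then 1 else 0 :=
    funext fun j => by simp [ev, eq_comm]
  simp only [hev]
  exact (Q.bilForm α).pi_apply_eq_sum_univ β

theorem bil_self (α : Q.I → ℤ) : Q.bil α α = 2 * (1 - Q.pp α) := by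
  have hvert : ∑ i, 2 * α i * α i = 2 * ∑ i, α i * α i := by
    simp only [Finset.mul_sum, mul_assoc]
  have hrev : ∑ a, α (Q.h a) * α (Q.t a) = ∑ a, α (Q.t a) * α (Q.h a) := by
    simp only [mul_comm]
  simp only [bil, pp, Fintype.sum_sum_type, hvert, hrev]
  ring

theorem bil_nonpos_of_mul_eq_zero (hα : 0 ≤ α) (hβ : 0 ≤ β) (h : α * β = 0) :
    Q.bil α β ≤ 0 := by
  have hvert : ∑ i, 2 * α i * β i = 0 :=
    Finset.sum_eq_zero fun i _ => by rw [mul_assoc, ← Pi.mul_apply, h, Pi.zero_apply, mul_zero]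
  have harr : 0 ≤ ∑ a : Q.DA, α (Q.dh a) * β (Q.dt a) :=
    Finset.sum_nonneg fun a _ => mul_nonneg (hα _) (hβ _)
  rw [bil, hvert]
  linarith

theorem bil_ev_self (i : Q.I) :
    Q.bil (Q.ev i) (Q.ev i) = 2 - 2 * (Finset.univ.filter fun a => Q.h a = i ∧ Q.t a = i).card := by
  have hloops : ∑ a, Q.ev i (Q.t a) * Q.ev i (Q.h a) =
      (Finset.univ.filter fun a => Q.h a = i ∧ Q.t a = i).card := by
    simp [ev, ← ite_and, Finset.sum_boole]
  have hvert : ∑ j, Q.ev i j * Q.ev i j = 1 := by simp [ev]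
  rw [bil_self, pp, hloops, hvert]
  ring

theorem Loopfree.bil_ev_self (hi : Q.Loopfree i) : Q.bil (Q.ev i) (Q.ev i) = 2 := by
  rw [FinQuiver.bil_ev_self, Finset.filter_false_of_mem fun a _ => hi a]
  simp

theorem exists_pos_mul_bil_ev (h : 0 < Q.bil α α) : ∃ i, 0 < α i * Q.bil α (Q.ev i) := by
  rw [bil_eq_sum_ev, ← Finset.sum_const_zero] at h
  obtain ⟨i, -, hi⟩ := Finset.exists_lt_of_sum_lt h
  exact ⟨i, hi⟩

theorem InFund.bil_self_nonpos (hα : Q.InFund α) : Q.bil α α ≤ 0 := by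
  obtain ⟨-, hnonneg, -, hbil⟩ := hα
  rw [bil_eq_sum_ev]
  exact Finset.sum_nonpos fun i _ => mul_nonpos_of_nonneg_of_nonpos (hnonneg i) (hbil i)

theorem refl_zero (i : Q.I) : Q.refl i 0 = 0 := by
  simp [refl, bil_zero_left]

theorem refl_neg (i : Q.I) (α : Q.I → ℤ) : Q.refl i (-α) = -Q.refl i α := by
  rw [refl, refl, bil_neg_left, neg_smul, neg_sub_neg, neg_sub]

theorem refl_apply_self (i : Q.I) (α : Q.I → ℤ) : Q.refl i α i = α i - Q.bil α (Q.ev i) := by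
  simp [refl, ev]

theorem refl_apply_of_ne (h : j ≠ i) (α : Q.I → ℤ) : Q.refl i α j = α j := by
  simp [refl, ev, h]

theorem bil_refl_left (i : Q.I) (α β : Q.I → ℤ) :
    Q.bil (Q.refl i α) β = Q.bil α (Q.refl i β) := by
  simp only [refl, bil_sub_left, bil_sub_right, bil_smul_left, bil_smul_right, smul_eq_mul,
    bil_comm (Q.ev i) β, mul_comm]

theorem Loopfree.refl_ev (hi : Q.Loopfree i) : Q.refl i (Q.ev i) = -Q.ev i := by
  rw [refl, hi.bil_ev_self]
  module

theorem Loopfree.refl_refl (hi : Q.Loopfree i) (α : Q.I → ℤ) : Q.refl i (Q.refl i α) = α := by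
  have hbil : Q.bil (Q.refl i α) (Q.ev i) = -Q.bil α (Q.ev i) := by
    rw [bil_refl_left, hi.refl_ev, bil_neg_right]
  rw [refl, hbil, refl]
  module

theorem Loopfree.bil_refl_refl (hi : Q.Loopfree i) (α β : Q.I → ℤ) :
    Q.bil (Q.refl i α) (Q.refl i β) = Q.bil α β := by
  rw [bil_refl_left, hi.refl_refl]

theorem sum_natAbs_refl_lt (hpos : 0 < α i * Q.bil α (Q.ev i)) (hle : |Q.bil α (Q.ev i)| ≤ 1) :
    ∑ j, (Q.refl i α j).natAbs < ∑ j, (α j).natAbs := by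
  have hself : (Q.refl i α i).natAbs < (α i).natAbs := by
    rw [refl_apply_self]
    rcases pos_and_pos_or_neg_and_neg_of_mul_pos hpos with ⟨hα, hbil⟩ | ⟨hα, hbil⟩ <;>
      rw [abs_le] at hle <;> omega
  refine Finset.sum_lt_sum (fun j _ => ?_) ⟨i, Finset.mem_univ i, hself⟩
  rcases eq_or_ne j i with rfl | hj
  · exact hself.le
  · rw [refl_apply_of_ne hj]

theorem PosDef.bil_self_pos (hQ : Q.PosDef) (hα : α ≠ 0) : 0 < Q.bil α α :=
  (hQ.1 α).lt_of_ne' (mt (hQ.2 α) hα)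

theorem PosDef.two_le_bil_self (hQ : Q.PosDef) (hα : α ≠ 0) : 2 ≤ Q.bil α α := by
  have hpos := hQ.bil_self_pos hα
  rw [bil_self] at hpos ⊢
  omega

theorem PosDef.loopfree (hQ : Q.PosDef) (i : Q.I) : Q.Loopfree i := by
  have hev : Q.ev i ≠ 0 := fun h => by simpa [ev] using congrFun h i
  have hpos := hQ.bil_self_pos hev
  rw [bil_ev_self] at hpos
  have hcard : (Finset.univ.filter fun a => Q.h a = i ∧ Q.t a = i).card = 0 := by omega
  exact fun a => Finset.filter_eq_empty_iff.mp (Finset.card_eq_zero.mp hcard) (Finset.mem_univ a)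

theorem PosDef.not_inFund (hQ : Q.PosDef) (α : Q.I → ℤ) : ¬ Q.InFund α :=
  fun hα => (hQ.bil_self_pos hα.1).not_ge hα.bil_self_nonpos

/- Write `α = α⁺ - α⁻`. Since `(α⁺, α⁻) ≤ 0`, two nonzero parts would give
`(α, α) ≥ (α⁺, α⁺) + (α⁻, α⁻) ≥ 4`. -/
theorem PosDef.nonneg_or_nonpos_of_bil_self_lt_four (hQ : Q.PosDef) (h : Q.bil α α < 4) :
    0 ≤ α ∨ α ≤ 0 := by
  by_contra! hmixed
  have hpos := hQ.two_le_bil_self (mt posPart_eq_zero.mp hmixed.2)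
  have hneg := hQ.two_le_bil_self (mt negPart_eq_zero.mp hmixed.1)
  have hmul : α⁺ * α⁻ = 0 := funext fun i => by
    rcases le_total 0 (α i) with hi | hi <;> simp [hi]
  have hcross := bil_nonpos_of_mul_eq_zero (posPart_nonneg α) (negPart_nonneg α) hmul
  have hexpand : Q.bil α α = Q.bil α⁺ α⁺ + Q.bil α⁻ α⁻ - 2 * Q.bil α⁺ α⁻ := by
    conv_lhs => rw [← posPart_sub_negPart α]
    rw [bil_sub_left, bil_sub_right, bil_sub_right, bil_comm α⁻ α⁺]
    ring
  linarith

theorem IsRoot.neg (hη : Q.IsRoot η) : Q.IsRoot (-η) := by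
  induction hη with
  | simple i hi => exact hi.refl_ev ▸ .reflect i hi _ (.simple i hi)
  | fund η hη => exact .neg_fund η hη
  | neg_fund η hη => exact (neg_neg η).symm ▸ .fund η hη
  | reflect i hi η _ ih => exact refl_neg i η ▸ .reflect i hi _ ih

theorem IsRoot.bil_self_eq_two (hη : Q.IsRoot η) (hQ : Q.PosDef) : Q.bil η η = 2 := by
  induction hη with
  | simple i hi => exact hi.bil_ev_self
  | fund η hη => exact absurd hη (hQ.not_inFund η)
  | neg_fund η hη => exact absurd hη (hQ.not_inFund η)
  | reflect i hi η _ ih => rw [hi.bil_refl_refl, ih]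

theorem IsRoot.isPosRoot_or_isPosRoot_neg (hη : Q.IsRoot η) (hQ : Q.PosDef) :
    Q.IsPosRoot η ∨ Q.IsPosRoot (-η) := by
  have htwo := hη.bil_self_eq_two hQ
  have hne : η ≠ 0 := by
    rintro rfl
    simp [bil_zero_left] at htwo
  rcases hQ.nonneg_or_nonpos_of_bil_self_lt_four (by omega : Q.bil η η < 4) with h | h
  · exact .inl ⟨hη, h, hne⟩
  · exact .inr ⟨hη.neg, neg_nonneg.mpr h, neg_ne_zero.mpr hne⟩

variable (Q) in
/-- A vector of the root lattice that is minuscule as a weight: it pairs with every root to `0`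
or `±1`. The zero vector counts as minuscule. -/
def IsMinuscule (α : Q.I → ℤ) : Prop := ∀ η, Q.IsRoot η → |Q.bil α η| ≤ 1

theorem IsMinuscule.refl (hα : Q.IsMinuscule α) (hi : Q.Loopfree i) :
    Q.IsMinuscule (Q.refl i α) := fun η hη => by
  rw [bil_refl_left]
  exact hα _ (.reflect i hi η hη)

theorem PosDef.isMinuscule_of_forall_isPosRoot (hQ : Q.PosDef)
    (hα : ∀ η, Q.IsPosRoot η → |Q.bil α η| ≤ 1) : Q.IsMinuscule α := fun η hη => by
  rcases hη.isPosRoot_or_isPosRoot_neg hQ with hpos | hneg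
  · exact hα η hpos
  · simpa only [bil_neg_right, abs_neg] using hα (-η) hneg

theorem IsMinuscule.eq_zero (hα : Q.IsMinuscule α) (hQ : Q.PosDef) : α = 0 := by
  induction hn : ∑ i, (α i).natAbs using Nat.strong_induction_on generalizing α with
  | _ n ih =>
    by_contra hne
    obtain ⟨i, hi⟩ := exists_pos_mul_bil_ev (hQ.bil_self_pos hne)
    have hloop := hQ.loopfree i
    have hlt := sum_natAbs_refl_lt hi (hα _ (.simple i hloop))
    have hrefl : Q.refl i α = 0 := ih _ (hn ▸ hlt) (hα.refl hloop) rfl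
    exact hne (by rw [← hloop.refl_refl α, hrefl, refl_zero])

end FinQuiver

theorem stmt17_general (Q : FinQuiver) (hQ : Q.PosDef) (α : Q.I → ℤ)
    (hα : ∀ η : Q.I → ℤ, Q.IsPosRoot η → |Q.bil α η| ≤ 1) : α = 0 :=
  (hQ.isMinuscule_of_forall_isPosRoot hα).eq_zero hQ

/-- for a Dynkin quiver there is no nonzero vector `α ∈ ℤ^{I°}` with
`−1 ≤ (α,η) ≤ 0` for all positive roots `η`. -/
theorem stmt17 (Q : FinQuiver) (hQ : Q.IsDynkin) (α : Q.I → ℤ) (hα : α ≠ 0) :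
    ¬ ∀ η : Q.I → ℤ, Q.IsPosRoot η → -1 ≤ Q.bil α η ∧ Q.bil α η ≤ 0 :=
  fun h => hα <| stmt17_general Q hQ.2 α fun η hη =>
    abs_le.mpr ⟨(h η hη).1, (h η hη).2.trans zero_le_one⟩

end
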